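/- Let C ⊆ ℝ³ be an infinite rational space curve that is not a line, and suppose C is invariant under two rotations f₁ and f₂ of ℝ³ with axes L₁ and L₂ respectively. Then L₁ and L₂ are not skew: either L₁ = L₂ or L₁ ∩ L₂ ≠ ∅. -/

import Mathlib

open Polynomial Matrix RealInnerProductSpace

noncomputable section

/-- A rational parametrization of a curve in `ℝⁿ`: components `pᵢ/qᵢ` with `qᵢ ≠ 0` and
`gcd(pᵢ, qᵢ) = 1`. -/
structure RatParam (n : ℕ) where
  p : Fin n → Polynomial ℝ
  q : Fin n → Polynomial ℝ
  q_ne_zero : ∀ i, q i ≠ 0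
  coprime : ∀ i, IsCoprime (p i) (q i)

namespace RatParam

variable {n : ℕ}

/-- The (cofinite) set of parameters where the parametrization is defined. -/
def domain (X : RatParam n) : Set ℝ := {t | ∀ i, (X.q i).eval t ≠ 0}

/-- The value of the parametrization at a parameter `t`. -/
def eval (X : RatParam n) (t : ℝ) : EuclideanSpace ℝ (Fin n) :=
  WithLp.toLp 2 fun i => (X.p i).eval t / (X.q i).eval t

/-- The associated rational curve: the image of the parametrization over its domain. -/
def curve (X : RatParam n) : Set (EuclideanSpace ℝ (Fin n)) := X.eval '' X.domain

/-- A parametrization is proper if it is injective outside some finite set of parameters. -/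
def Proper (X : RatParam n) : Prop :=
  ∃ F : Set ℝ, F.Finite ∧ Set.InjOn X.eval (X.domain \ F)

end RatParam

/-- A line in `ℝⁿ`: a one-dimensional affine subspace, as a set. -/
def IsLine {n : ℕ} (S : Set (EuclideanSpace ℝ (Fin n))) : Prop :=
  ∃ (p v : EuclideanSpace ℝ (Fin n)), v ≠ 0 ∧ S = {x | ∃ s : ℝ, x = p + s • v}

/-- A rotation of `ℝ³`: an orientation-preserving isometry `x ↦ Q x + v` (`Q ∈ SO(3)`),
different from the identity, having a fixed point. -/
def IsRotation (f : EuclideanSpace ℝ (Fin 3) → EuclideanSpace ℝ (Fin 3)) : Prop :=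
  (∃ (Q : Matrix (Fin 3) (Fin 3) ℝ) (v : EuclideanSpace ℝ (Fin 3)),
    Q ∈ Matrix.orthogonalGroup (Fin 3) ℝ ∧ Q.det = 1 ∧ ∀ x i, f x i = Q.mulVec x i + v i) ∧
  f ≠ id ∧ ∃ p, f p = p

/-!
An isometry `f` of `ℝⁿ` preserving a rational curve `C` that is not a line has a fixed point.
Indeed, if it has none, its orbits escape to infinity, while the displacements `f x - x` along an
orbit are the iterates of a vector under the linear part of `f`, so they return arbitrarily close
to the initial one. The displacement is a rational function of the parameter, and the curve escapes
to infinity only at finitely many parameters in `ℝ ∪ {∞}`, at each of which a rational function has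
at most one finite limit. Hence the displacement takes finitely many values on `C`, so it is
constant, and `C`, being invariant under a translation, is a line.

Now let `f` and `g` be orientation-preserving isometries of `ℝ³` preserving `C`. Then `f`, `g`,
`f * g` and the commutator of `f` and `g` all have fixed points. If `f (g z) = z` but `g z ≠ z`,
both `f` and `g` fix a line in the perpendicular bisector of `z` and `g z`, and these lines meet
unless they are parallel. If they are parallel, the linear parts commute, so the commutator is a
translation with a fixed point, i.e. `f` and `g` commute, and this forces a common fixed point.
-/

open Filter Topology Bornology

section Recurrence

variable {α : Type*} [PseudoMetricSpace α]

lemma mapClusterPt_iterate_of_isometry {g : α → α} (hg : Isometry g) {K : Set α}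
    (hK : IsCompact K) {x : α} (hx : ∀ n, g^[n] x ∈ K) :
    MapClusterPt x atTop fun n => g^[n] x := by
  have hiso : ∀ m, Isometry g^[m] := fun m => by
    induction m with
    | zero => exact isometry_id
    | succ m ih => exact ih.comp hg
  obtain ⟨z, -, hz⟩ := hK.exists_mapClusterPt (f := atTop) (u := fun n => g^[n] x)
    (by simpa using ⟨0, fun n _ => hx n⟩)
  rw [Metric.nhds_basis_ball.mapClusterPt_iff_frequently]
  intro ε hε
  have hclose := mapClusterPt_iff_frequently.1 hz _ (Metric.ball_mem_nhds z (half_pos hε))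
  rw [frequently_atTop] at hclose ⊢
  intro N
  obtain ⟨m, -, hm⟩ := hclose 0
  obtain ⟨k, hk, hk'⟩ := hclose (N + m)
  obtain ⟨j, rfl⟩ := Nat.exists_eq_add_of_le' (le_of_add_le_right hk)
  refine ⟨j, by omega, ?_⟩
  calc dist (g^[j] x) x = dist (g^[j + m] x) (g^[m] x) := by
        rw [Nat.add_comm, Function.iterate_add_apply, (hiso m).dist_eq]
    _ < ε := by
        rw [Metric.mem_ball] at hm hk'
        linarith [dist_triangle_right (g^[j + m] x) (g^[m] x) z]

lemma ultrafilter_le_cobounded_or_le_nhds [ProperSpace α] (U : Ultrafilter α) :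
    (U : Filter α) ≤ cobounded α ∨ ∃ x, (U : Filter α) ≤ 𝓝 x := by
  by_contra! h
  obtain ⟨hU, hx⟩ := h
  obtain ⟨s, hs, hsU⟩ := Filter.not_le.1 hU
  have hsc : sᶜ ∈ U := Ultrafilter.compl_mem_iff_notMem.2 hsU
  have hcpt : IsCompact (closure sᶜ) :=
    (isBounded_def.2 ((compl_compl s).symm ▸ hs)).isCompact_closure
  obtain ⟨x, -, hle⟩ := hcpt.ultrafilter_le_nhds U
    (le_principal_iff.2 (mem_of_superset hsc subset_closure))
  exact hx x hle

end Recurrence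

section FixedPointFree

lemma exists_linearMap_apply_eq_add_one {K V : Type*} [Field K] [AddCommGroup V] [Module K V]
    {f : V →ᵃ[K] V} (hf : ∀ x, f x ≠ x) : ∃ φ : V →ₗ[K] K, ∀ x, φ (f x) = φ x + 1 := by
  have hlin : ∀ x, f x = f.linear x + f 0 := fun x => by simpa using f.map_vadd 0 x
  have h0 : f 0 ∉ (f.linear - LinearMap.id).range := by
    rintro ⟨x, hx⟩
    refine hf (-x) ?_
    rw [hlin, ← hx, map_neg, LinearMap.sub_apply, LinearMap.id_apply]
    abel
  obtain ⟨ψ, hψ0, hψ⟩ := Submodule.exists_le_ker_of_notMem h0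
  have hψlin : ∀ x, ψ (f.linear x) = ψ x := fun x => by simpa [sub_eq_zero] using hψ ⟨x, rfl⟩
  exact ⟨(ψ (f 0))⁻¹ • ψ, fun x => by simp [hlin x, hψlin, mul_add, hψ0]⟩

lemma tendsto_iterate_cobounded_of_forall_ne {V : Type*} [NormedAddCommGroup V] [NormedSpace ℝ V]
    [FiniteDimensional ℝ V] {f : V →ᵃ[ℝ] V} (hf : ∀ x, f x ≠ x) (x : V) :
    Tendsto (fun n => f^[n] x) atTop (cobounded V) := by
  obtain ⟨φ, hφ⟩ := exists_linearMap_apply_eq_add_one hf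
  have hφn : ∀ n : ℕ, φ (f^[n] x) = φ x + n := fun n => by
    induction n with
    | zero => simp
    | succ n ih => rw [Function.iterate_succ_apply', hφ, ih, Nat.cast_succ, add_assoc]
  have hφ_tendsto : Tendsto (fun n => φ (f^[n] x)) atTop (cobounded ℝ) := by
    simp_rw [hφn]
    exact (tendsto_atTop_add_const_left _ _ tendsto_natCast_atTop_atTop).mono_right
      IsOrderBornology.atTop_le_cobounded
  exact (tendsto_comap_iff.2 hφ_tendsto).mono_right
    (LinearMap.toContinuousLinearMap φ).lipschitz.comap_cobounded_le

end FixedPointFree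

section Meromorphic

variable {F : Type*} [NormedAddCommGroup F] [NormedSpace ℝ F]

lemma subsingleton_limits_of_meromorphicAt {g : ℝ → F} {τ : ℝ} (hg : MeromorphicAt g τ) :
    {c | ∃ U : Ultrafilter ℝ, ↑U ≤ 𝓝[≠] τ ∧ Tendsto g U (𝓝 c)}.Subsingleton := by
  rintro c ⟨U, hU, hc⟩ d ⟨W, hW, hd⟩
  rcases le_or_gt 0 (meromorphicOrderAt g τ) with ho | ho
  · obtain ⟨e, he⟩ := tendsto_nhds_of_meromorphicOrderAt_nonneg hg ho
    rw [tendsto_nhds_unique hc (he.mono_left hU), tendsto_nhds_unique hd (he.mono_left hW)]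
  · exact absurd ((tendsto_cobounded_of_meromorphicOrderAt_neg ho).mono_left hU)
      (hc.not_tendsto (Metric.disjoint_nhds_cobounded c))

/-- Meromorphy on the projective line `ℝ ∪ {∞}`, with `s ↦ s⁻¹` as the chart at `∞`: the property
of rational functions by which they have at most one finite limit at each parameter. -/
structure MeromorphicOnProjLine (g : ℝ → F) : Prop where
  at_real : ∀ τ, MeromorphicAt g τ
  at_infty : MeromorphicAt (fun s => g s⁻¹) 0

lemma MeromorphicOnProjLine.subsingleton_limits_cobounded {g : ℝ → F}
    (hg : MeromorphicOnProjLine g) :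
    {c | ∃ U : Ultrafilter ℝ, ↑U ≤ cobounded ℝ ∧ Tendsto g U (𝓝 c)}.Subsingleton := by
  refine (subsingleton_limits_of_meromorphicAt hg.at_infty).anti ?_
  rintro c ⟨U, hU, hc⟩
  refine ⟨U.map (·⁻¹), tendsto_inv₀_cobounded'.mono_left hU, ?_⟩
  rw [Ultrafilter.coe_map, tendsto_map'_iff]
  simpa [Function.comp_def] using hc

lemma meromorphicOnProjLine_polynomial_eval (P : ℝ[X]) :
    MeromorphicOnProjLine fun t => P.eval t where
  at_real τ := (AnalyticOnNhd.eval_polynomial P τ trivial).meromorphicAt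
  at_infty := by
    simp_rw [Polynomial.eval_eq_sum_range]
    fun_prop

end Meromorphic

section Translations

lemma exists_ne_uIcc_subset_of_finite_compl {ι α : Type*} [Infinite ι] [LinearOrder α] {D : Set α}
    (hD : Dᶜ.Finite) {t : ι → α} (ht : ∀ i, t i ∈ D) :
    ∃ i j, i ≠ j ∧ Set.uIcc (t i) (t j) ⊆ D := by
  have : Finite (𝒫 Dᶜ) := hD.finite_subsets
  let below (i : ι) : 𝒫 Dᶜ := ⟨{τ ∈ Dᶜ | τ < t i}, fun _ h => h.1⟩
  obtain ⟨i, j, hij, hbelow⟩ := Finite.exists_ne_map_eq_of_infinite below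
  refine ⟨i, j, hij, fun τ hτ => by_contra fun hτD => ?_⟩
  have hiff : τ < t i ↔ τ < t j := by
    have := congrArg (τ ∈ ·.1) hbelow
    simpa [below, hτD] using this
  have hne : ∀ k, τ ≠ t k := fun k h => hτD (h ▸ ht k)
  rcases Set.mem_uIcc.1 hτ with ⟨h, h'⟩ | ⟨h, h'⟩
  · exact h.not_gt (hiff.2 (h'.lt_of_ne (hne j)))
  · exact h.not_gt (hiff.1 (h'.lt_of_ne (hne i)))

lemma exists_int_add_mem_uIcc {i j : ℕ} (hij : i ≠ j) (s : ℝ) :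
    ∃ k : ℤ, s + k ∈ Set.uIcc (i : ℝ) j := by
  obtain ⟨k, hk, -⟩ := existsUnique_add_zsmul_mem_Ico one_pos s (min i j : ℝ)
  have hlen : min (i : ℝ) j + 1 ≤ max (i : ℝ) j := by
    exact_mod_cast (by omega : min i j + 1 ≤ max i j)
  rw [zsmul_one] at hk
  exact ⟨k, hk.1, hk.2.le.trans hlen⟩

lemma add_zsmul_mem_iff {G : Type*} [AddGroup G] {S : Set G} {w : G}
    (hS : ∀ x, x + w ∈ S ↔ x ∈ S) (k : ℤ) : ∀ x, x + k • w ∈ S ↔ x ∈ S := by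
  induction k with
  | zero => simp
  | succ k ih => intro x; rw [add_zsmul, one_zsmul, ← add_assoc, hS, ih]
  | pred k ih => intro x; rw [← hS, sub_zsmul, one_zsmul, add_assoc, neg_add_cancel_right, ih]

end Translations

namespace RatParam

variable {n : ℕ} (X : RatParam n) {F : Type*} [NormedAddCommGroup F] [NormedSpace ℝ F]

local notation "E" => EuclideanSpace ℝ (Fin n)

lemma finite_compl_domain : X.domainᶜ.Finite := by
  have hroots : X.domainᶜ = ⋃ i, {t | (X.q i).IsRoot t} := by
    ext t
    simp [domain]
  rw [hroots]
  exact Set.finite_iUnion fun i => Polynomial.finite_setOfPred_isRoot (X.q_ne_zero i)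

lemma domain_infinite : X.domain.Infinite :=
  compl_compl X.domain ▸ X.finite_compl_domain.infinite_compl

lemma continuousAt_eval {t : ℝ} (ht : t ∈ X.domain) : ContinuousAt X.eval t := by
  refine (PiLp.continuous_toLp 2 _).continuousAt.comp (continuousAt_pi.2 fun i => ?_)
  exact (X.p i).continuousAt.div (X.q i).continuousAt (ht i)

lemma affine_eval {V : Type*} [AddCommGroup V] [Module ℝ V] (g : E →ᵃ[ℝ] V) (t : ℝ) :
    g (X.eval t) = ∑ i, ((X.p i).eval t / (X.q i).eval t) •
      g.linear (EuclideanSpace.single i 1) + g 0 := by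
  have hlin : g (X.eval t) = g.linear (X.eval t) + g 0 := by simpa using g.map_vadd 0 (X.eval t)
  rw [hlin, ← (EuclideanSpace.basisFun (Fin n) ℝ).sum_repr (X.eval t)]
  simp [eval]

lemma meromorphicOnProjLine_affine_eval (g : E →ᵃ[ℝ] F) :
    MeromorphicOnProjLine fun t => g (X.eval t) := by
  simp_rw [affine_eval]
  constructor
  · intro τ
    refine (MeromorphicAt.fun_sum fun i _ => ?_).add (.const _ _)
    exact (((meromorphicOnProjLine_polynomial_eval _).at_real τ).div
      ((meromorphicOnProjLine_polynomial_eval _).at_real τ)).smul (.const _ _)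
  · refine (MeromorphicAt.fun_sum fun i _ => ?_).add (.const _ _)
    exact (((meromorphicOnProjLine_polynomial_eval _).at_infty).div
      ((meromorphicOnProjLine_polynomial_eval _).at_infty)).smul (.const _ _)

lemma finite_limits_of_tendsto_eval_cobounded {g : ℝ → F} (hg : MeromorphicOnProjLine g) :
    {c | ∃ U : Ultrafilter ℝ, Tendsto X.eval U (cobounded _) ∧ Tendsto g U (𝓝 c)}.Finite := by
  refine ((hg.subsingleton_limits_cobounded).finite.union (X.finite_compl_domain.biUnion fun τ _ =>
    (subsingleton_limits_of_meromorphicAt (hg.at_real τ)).finite)).subset ?_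
  rintro c ⟨U, hU, hc⟩
  have hbdd : ∀ x, ¬ Tendsto X.eval U (𝓝 x) := fun x =>
    hU.not_tendsto (Metric.disjoint_nhds_cobounded x).symm
  rcases ultrafilter_le_cobounded_or_le_nhds U with hinf | ⟨τ, hτ⟩
  · exact .inl ⟨U, hinf, hc⟩
  have hτdom : τ ∉ X.domain := fun h => hbdd _ ((X.continuousAt_eval h).mono_left hτ)
  have hτU : {τ}ᶜ ∈ U := Ultrafilter.compl_mem_iff_notMem.2 fun h =>
    hbdd _ ((tendsto_pure_nhds X.eval τ).mono_left (le_pure_iff.2 h))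
  exact .inr (Set.mem_biUnion hτdom ⟨U, le_inf hτ (le_principal_iff.2 hτU), hc⟩)

lemma exists_polynomial_isRoot_iff (φ : E →ᵃ[ℝ] ℝ) :
    ∃ r : ℝ[X], ∀ t ∈ X.domain, r.IsRoot t ↔ φ (X.eval t) = 0 := by
  refine ⟨∑ i, X.p i * (∏ j ∈ Finset.univ.erase i, X.q j) *
    C (φ.linear (EuclideanSpace.single i 1)) + (∏ j, X.q j) * C (φ 0), fun t ht => ?_⟩
  have hterm : ∀ i, (X.p i).eval t * ∏ j ∈ Finset.univ.erase i, (X.q j).eval t =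
      (∏ j, (X.q j).eval t) * ((X.p i).eval t / (X.q i).eval t) := fun i => by
    rw [← Finset.mul_prod_erase _ _ (Finset.mem_univ i)]
    field_simp [ht i]
  have hprod : ∏ j, (X.q j).eval t ≠ 0 := Finset.prod_ne_zero_iff.2 fun j _ => ht j
  rw [← mul_eq_zero_iff_left hprod, IsRoot.def]
  simp only [affine_eval, eval_add, eval_finsetSum, eval_mul, eval_C, eval_prod, hterm]
  simp only [mul_add, Finset.mul_sum, smul_eq_mul, mul_assoc]

lemma affine_eval_eq_of_infinite {V : Type*} [AddCommGroup V] [Module ℝ V] (g : E →ᵃ[ℝ] V) {w : V}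
    (h : {t ∈ X.domain | g (X.eval t) = w}.Infinite) {t : ℝ} (ht : t ∈ X.domain) :
    g (X.eval t) = w := by
  rw [← sub_eq_zero, ← Module.forall_dual_apply_eq_zero_iff ℝ]
  intro ψ
  obtain ⟨r, hr⟩ := X.exists_polynomial_isRoot_iff
    (ψ.toAffineMap.comp (g - AffineMap.const ℝ _ w))
  have hr0 : r = 0 := r.eq_zero_of_infinite_isRoot
    (h.mono fun s hs => (hr s hs.1).2 (by simp [hs.2]))
  simpa [hr0] using hr t ht

lemma exists_ultrafilter_tendsto_displacement {f : E ≃ᵃⁱ[ℝ] E} (hf : f '' X.curve = X.curve)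
    (hfix : ∀ x, f x ≠ x) {x : E} (hx : x ∈ X.curve) :
    ∃ U : Ultrafilter ℝ, Tendsto X.eval U (cobounded E) ∧
      Tendsto (fun t => f (X.eval t) - X.eval t) U (𝓝 (f x - x)) := by
  have horbit : ∀ k, f^[k] x ∈ X.curve := fun k =>
    (Set.mapsTo_iff_image_subset.2 hf.subset).iterate k hx
  choose t _ htx using horbit
  have hdisp : ∀ k, f (f^[k] x) - f^[k] x = f.linearIsometryEquiv^[k] (f x - x) := fun k => by
    induction k with
    | zero => rfl
    | succ k ih =>
      rw [Function.iterate_succ_apply', Function.iterate_succ_apply', ← ih]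
      exact (f.map_vsub _ _).symm
  have hrec : MapClusterPt (f x - x) atTop fun k => f.linearIsometryEquiv^[k] (f x - x) := by
    have hnorm : ∀ k y, ‖f.linearIsometryEquiv^[k] y‖ = ‖y‖ := fun k y => by
      induction k with
      | zero => rfl
      | succ k ih => rw [Function.iterate_succ_apply', LinearIsometryEquiv.norm_map, ih]
    exact mapClusterPt_iterate_of_isometry f.linearIsometryEquiv.isometry
      (isCompact_closedBall 0 ‖f x - x‖) fun k => by
        rw [mem_closedBall_zero_iff, hnorm]
  obtain ⟨U, hU, hlim⟩ := mapClusterPt_iff_ultrafilter.1 hrec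
  refine ⟨U.map t, ?_, ?_⟩ <;> rw [Ultrafilter.coe_map, tendsto_map'_iff]
  · have hescape : Tendsto (fun k => f^[k] x) atTop (cobounded E) :=
      tendsto_iterate_cobounded_of_forall_ne (f := f.toAffineEquiv.toAffineMap) hfix x
    simpa only [Function.comp_def, htx] using hescape.mono_left hU
  · simpa only [Function.comp_def, htx, hdisp] using hlim

lemma exists_affine_eval_eq_of_forall_mem {V : Type*} [AddCommGroup V] [Module ℝ V]
    (g : E →ᵃ[ℝ] V) {S : Set V} (hS : S.Finite) (hg : ∀ x ∈ X.curve, g x ∈ S) :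
    ∃ w, ∀ x ∈ X.curve, g x = w := by
  have hcover : X.domain ⊆ ⋃ w ∈ S, {t ∈ X.domain | g (X.eval t) = w} := fun t ht =>
    Set.mem_biUnion (hg _ ⟨t, ht, rfl⟩) ⟨ht, rfl⟩
  obtain ⟨w, -, hw⟩ : ∃ w ∈ S, {t ∈ X.domain | g (X.eval t) = w}.Infinite := by
    by_contra! h
    exact X.domain_infinite ((hS.biUnion h).subset hcover)
  exact ⟨w, by rintro _ ⟨t, ht, rfl⟩; exact X.affine_eval_eq_of_infinite g hw ht⟩

lemma curve_subset_of_infinite_collinear {p w : E}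
    (h : {t ∈ X.domain | ∃ s : ℝ, X.eval t = p + s • w}.Infinite) {x : E} (hx : x ∈ X.curve) :
    ∃ s : ℝ, x = p + s • w := by
  have hiff : ∀ y, (ℝ ∙ w).mkQ.toAffineMap y = (ℝ ∙ w).mkQ p ↔ ∃ s : ℝ, y = p + s • w := by
    intro y
    rw [LinearMap.coe_toAffineMap, Submodule.mkQ_apply, Submodule.mkQ_apply,
      Submodule.Quotient.eq, Submodule.mem_span_singleton]
    exact exists_congr fun s => by rw [eq_comm, sub_eq_iff_eq_add']
  obtain ⟨t, ht, rfl⟩ := hx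
  simp_rw [← hiff] at h ⊢
  exact X.affine_eval_eq_of_infinite _ h ht

lemma add_smul_mem_curve_of_mem_uIcc {p w : E} (hw : w ≠ 0)
    (hline : ∀ x ∈ X.curve, ∃ s : ℝ, x = p + s • w) {a b α β r : ℝ}
    (hdom : Set.uIcc a b ⊆ X.domain) (ha : X.eval a = p + α • w) (hb : X.eval b = p + β • w)
    (hr : r ∈ Set.uIcc α β) : p + r • w ∈ X.curve := by
  let coord (x : E) : ℝ := ⟪w, x - p⟫ / ⟪w, w⟫
  have hcoord : ∀ s : ℝ, coord (p + s • w) = s := fun s => by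
    simp [coord, real_inner_smul_right, hw]
  have hcont : ContinuousOn (fun τ => coord (X.eval τ)) (Set.uIcc a b) := fun τ hτ =>
    ((by fun_prop : Continuous coord).continuousAt.comp
      (X.continuousAt_eval (hdom hτ))).continuousWithinAt
  obtain ⟨τ, hτ, hτr : coord (X.eval τ) = r⟩ :=
    intermediate_value_uIcc hcont (by rwa [ha, hb, hcoord, hcoord])
  have hτC : X.eval τ ∈ X.curve := ⟨τ, hdom hτ, rfl⟩
  obtain ⟨s, hs⟩ := hline _ hτC
  rw [hs, hcoord] at hτr
  rwa [hs, hτr] at hτC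

lemma isLine_curve_of_translation {w : E} (hw : w ≠ 0)
    (hC : ∀ x, x + w ∈ X.curve ↔ x ∈ X.curve) : IsLine X.curve := by
  obtain ⟨t₀, ht₀⟩ := X.domain_infinite.nonempty
  set p := X.eval t₀
  have hpC : ∀ k : ℕ, p + (k : ℝ) • w ∈ X.curve := fun k => by
    simpa only [natCast_zsmul, Nat.cast_smul_eq_nsmul] using
      (add_zsmul_mem_iff hC k p).2 ⟨t₀, ht₀, rfl⟩
  choose t ht htp using hpC
  have hinj : t.Injective := fun k l hkl => by
    have hsmul : (k : ℝ) • w = (l : ℝ) • w :=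
      add_left_cancel ((htp k).symm.trans (hkl ▸ htp l))
    exact Nat.cast_injective (smul_left_injective ℝ hw hsmul)
  have hline : ∀ x ∈ X.curve, ∃ s : ℝ, x = p + s • w := fun x =>
    X.curve_subset_of_infinite_collinear ((Set.infinite_range_of_injective hinj).mono
      (Set.range_subset_iff.2 fun k => ⟨ht k, k, htp k⟩))
  refine ⟨p, w, hw, Set.Subset.antisymm hline ?_⟩
  rintro _ ⟨s, rfl⟩
  -- Some arc of the curve joins two of these points without passing through a pole, so it covers
  -- a segment containing a translate of every point of the line.
  obtain ⟨i, j, hij, hdom⟩ := exists_ne_uIcc_subset_of_finite_compl X.finite_compl_domain ht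
  obtain ⟨k, hk⟩ := exists_int_add_mem_uIcc hij s
  have hsk := X.add_smul_mem_curve_of_mem_uIcc hw hline hdom (htp i) (htp j) hk
  rwa [add_smul, ← add_assoc, Int.cast_smul_eq_zsmul, add_zsmul_mem_iff hC] at hsk

theorem exists_fixedPoint (hline : ¬ IsLine X.curve) {f : E ≃ᵃⁱ[ℝ] E}
    (hf : f '' X.curve = X.curve) : ∃ x, f x = x := by
  by_contra! hfix
  let displacement : E →ᵃ[ℝ] E := f.toAffineEquiv.toAffineMap - AffineMap.id ℝ E
  have hfinite := X.finite_limits_of_tendsto_eval_cobounded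
    (X.meromorphicOnProjLine_affine_eval displacement)
  obtain ⟨w, hw⟩ := X.exists_affine_eval_eq_of_forall_mem displacement hfinite
    fun x hx => X.exists_ultrafilter_tendsto_displacement hf hfix hx
  have hfw : ∀ x ∈ X.curve, f x = x + w := fun x hx => sub_eq_iff_eq_add'.1 (hw x hx)
  have htrans : ∀ x, x + w ∈ X.curve ↔ x ∈ X.curve := fun x => by
    refine ⟨fun hx => ?_, fun hx => hfw x hx ▸ hf ▸ Set.mem_image_of_mem f hx⟩
    obtain ⟨y, hy, hyx⟩ := hf ▸ hx
    rw [hfw y hy, add_left_inj] at hyx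
    exact hyx ▸ hy
  obtain ⟨t, ht⟩ := X.domain_infinite.nonempty
  have hw0 : w ≠ 0 := fun h => hfix (X.eval t) (by rw [hfw _ ⟨t, ht, rfl⟩, h, add_zero])
  exact hline (X.isLine_curve_of_translation hw0 htrans)

end RatParam

section Spans

lemma map_eq_self_of_mem_span_singleton {R M F : Type*} [Semiring R] [AddCommMonoid M] [Module R M]
    [FunLike F M M] [LinearMapClass F R M M] {φ : F} {a v : M} (ha : φ a = a) (hv : v ∈ R ∙ a) :
    φ v = v := by
  obtain ⟨c, rfl⟩ := Submodule.mem_span_singleton.1 hv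
  rw [map_smul, ha]

lemma finrank_sup_span_singleton {K V : Type*} [Field K] [AddCommGroup V] [Module K V] {a b : V}
    (ha : a ≠ 0) (hb : b ≠ 0) (hab : Disjoint (K ∙ a) (K ∙ b)) :
    Module.finrank K ↥((K ∙ a) ⊔ (K ∙ b)) = 2 := by
  have h := Submodule.finrank_sup_add_finrank_inf_eq (K ∙ a) (K ∙ b)
  rwa [hab.eq_bot, finrank_bot, add_zero, finrank_span_singleton ha, finrank_span_singleton hb] at h

end Spans

section Orthogonal

open Module

variable {V : Type*} [NormedAddCommGroup V] [InnerProductSpace ℝ V]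

/-- The determinant as a character of the orthogonal group of `V`. -/
def orthogonalDet : (V ≃ₗᵢ[ℝ] V) →* ℝ where
  toFun φ := LinearMap.det (φ.toLinearEquiv : V →ₗ[ℝ] V)
  map_one' := LinearMap.det_id
  map_mul' φ ψ := LinearMap.det_comp (φ.toLinearEquiv : V →ₗ[ℝ] V) ψ.toLinearEquiv

lemma prod_reflections_apply_of_orthogonal {l : List V} {x : V} (h : ∀ y ∈ l, ⟪y, x⟫ = 0) :
    (l.map fun y => (ℝ ∙ y)ᗮ.reflection).prod x = x := by
  induction l with
  | nil => rfl
  | cons y l ih =>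
    rw [List.forall_mem_cons] at h
    rw [List.map_cons, List.prod_cons, LinearIsometryEquiv.coe_mul, Function.comp_apply, ih h.2]
    exact Submodule.reflection_mem_subspace_eq_self
      (Submodule.mem_orthogonal_singleton_iff_inner_right.2 h.1)

variable [FiniteDimensional ℝ V]

lemma orthogonalDet_reflection {x : V} (hx : x ≠ 0) :
    orthogonalDet (ℝ ∙ x)ᗮ.reflection = -1 := by
  have := (ℝ ∙ x)ᗮ.det_reflection
  rwa [Submodule.orthogonal_orthogonal, finrank_span_singleton hx, pow_one] at this

lemma exists_reflections_of_fixed {φ : V ≃ₗᵢ[ℝ] V} {W : Submodule ℝ V} (hW : ∀ x ∈ W, φ x = x) :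
    ∃ l : List V, l.length ≤ finrank ℝ Wᗮ ∧ (∀ x ∈ l, x ≠ 0) ∧
      φ = (l.map fun x => (ℝ ∙ x)ᗮ.reflection).prod := by
  have hle : W ≤ (ContinuousLinearMap.id ℝ V - φ).ker := fun x hx => by simp [hW x hx]
  have hone : (⊤ : Submodule ℝ V).reflection = 1 := by
    ext y
    exact Submodule.reflection_mem_subspace_eq_self trivial
  obtain ⟨l, hl, hφ⟩ := φ.reflections_generate_dim_aux
    (Submodule.finrank_mono (Submodule.orthogonal_le hle))
  classical
  refine ⟨l.filter (· ≠ 0), (List.length_filter_le _ l).trans hl, by simp, ?_⟩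
  rw [hφ]
  clear hφ hl
  induction l with
  | nil => rfl
  | cons x l ih =>
    by_cases hx : x = 0
    · simp [hx, ih, hone]
    · simp [hx, ih]

lemma orthogonalDet_prod_reflections {l : List V} (hl : ∀ x ∈ l, x ≠ 0) :
    orthogonalDet (l.map fun x => (ℝ ∙ x)ᗮ.reflection).prod = (-1) ^ l.length := by
  rw [map_list_prod, List.map_map, List.prod_eq_pow_card _ (-1), List.length_map]
  simpa using fun x hx => orthogonalDet_reflection (hl x hx)

lemma eq_one_of_fixed_of_codim_le_one {φ : V ≃ₗᵢ[ℝ] V} (hφ : orthogonalDet φ = 1)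
    {W : Submodule ℝ V} (hW : ∀ x ∈ W, φ x = x) (hcodim : finrank ℝ Wᗮ ≤ 1) : φ = 1 := by
  obtain ⟨l, hlen, hl, rfl⟩ := exists_reflections_of_fixed hW
  rw [orthogonalDet_prod_reflections hl] at hφ
  match l with
  | [] => rfl
  | [x] => norm_num at hφ
  | _ :: _ :: _ => simp at hlen; omega

lemma mul_self_eq_one_of_fixed_of_codim_le_two {φ : V ≃ₗᵢ[ℝ] V} (hφ : orthogonalDet φ = -1)
    {W : Submodule ℝ V} (hW : ∀ x ∈ W, φ x = x) (hcodim : finrank ℝ Wᗮ ≤ 2) : φ * φ = 1 := by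
  obtain ⟨l, hlen, hl, rfl⟩ := exists_reflections_of_fixed hW
  rw [orthogonalDet_prod_reflections hl] at hφ
  match l with
  | [] => norm_num at hφ
  | [x] => simp [Submodule.reflection_mul_reflection]
  | [x, y] => norm_num at hφ
  | _ :: _ :: _ :: _ => simp at hlen; omega

lemma exists_ne_zero_fixed_of_odd_finrank (hV : Odd (finrank ℝ V)) {φ : V ≃ₗᵢ[ℝ] V}
    (hφ : orthogonalDet φ = 1) : ∃ x ≠ 0, φ x = x := by
  obtain ⟨l, hlen, hl, rfl⟩ := exists_reflections_of_fixed (φ := φ) (W := ⊥) (by simp)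
  rw [orthogonalDet_prod_reflections hl, neg_one_pow_eq_one_iff_even (by norm_num)] at hφ
  rw [Submodule.bot_orthogonal_eq_top, finrank_top] at hlen
  classical
  have hspan : Submodule.span ℝ (l.toFinset : Set V) ≠ ⊤ := fun h => by
    have hcard := finrank_span_finset_le_card (R := ℝ) l.toFinset
    rw [Set.finrank, h, finrank_top] at hcard
    have : finrank ℝ V = l.length := le_antisymm (hcard.trans l.toFinset_card_le) hlen
    exact Nat.not_even_iff_odd.2 hV (this ▸ hφ)
  obtain ⟨x, hx, hx0⟩ := Submodule.exists_mem_ne_zero_of_ne_bot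
    (mt Submodule.orthogonal_eq_bot_iff.1 hspan)
  refine ⟨x, hx0, ?_⟩
  exact prod_reflections_apply_of_orthogonal fun y hy =>
    (Submodule.mem_orthogonal _ _).1 hx y (Submodule.subset_span (by simpa using hy))

lemma commute_of_mul_self_eq_one {G : Type*} [Group G] {r a b : G} (hr : r * r = 1)
    (ha : r * a * (r * a) = 1) (hb : r * b * (r * b) = 1)
    (hab : r * (a * b) * (r * (a * b)) = 1) : Commute a b := by
  have hinv : ∀ c, r * c * (r * c) = 1 → r * c * r = c⁻¹ := fun c hc =>
    eq_inv_of_mul_eq_one_left (by simpa only [mul_assoc] using hc)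
  apply inv_injective
  calc (a * b)⁻¹ = r * (a * b) * r := (hinv _ hab).symm
    _ = r * a * (r * r) * b * r := by simp only [hr, mul_one, mul_assoc]
    _ = (r * a * r) * (r * b * r) := by simp only [mul_assoc]
    _ = (b * a)⁻¹ := by rw [hinv a ha, hinv b hb, _root_.mul_inv_rev]

lemma commute_of_fixed_of_codim_le_two {φ ψ : V ≃ₗᵢ[ℝ] V} (hφ : orthogonalDet φ = 1)
    (hψ : orthogonalDet ψ = 1) {W : Submodule ℝ V} (hφW : ∀ x ∈ W, φ x = x)
    (hψW : ∀ x ∈ W, ψ x = x) (hcodim : finrank ℝ Wᗮ ≤ 2) : Commute φ ψ := by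
  rcases eq_or_ne Wᗮ ⊥ with htop | hne
  · rw [eq_one_of_fixed_of_codim_le_one hφ hφW (by rw [htop, finrank_bot]; exact zero_le_one)]
    exact .one_left ψ
  obtain ⟨x, hx, hx0⟩ := Submodule.exists_mem_ne_zero_of_ne_bot hne
  -- Composing with a reflection turns a rotation of the plane `Wᗮ` into a reflection.
  set ρ := (ℝ ∙ x)ᗮ.reflection
  have hρW : ∀ y ∈ W, ρ y = y := fun y hy => Submodule.reflection_mem_subspace_eq_self
    (Submodule.mem_orthogonal_singleton_iff_inner_left.2 (hx y hy))
  have hinvol : ∀ χ : V ≃ₗᵢ[ℝ] V, orthogonalDet χ = 1 → (∀ y ∈ W, χ y = y) →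
      ρ * χ * (ρ * χ) = 1 := fun χ hχ hχW =>
    mul_self_eq_one_of_fixed_of_codim_le_two
      (by rw [map_mul, orthogonalDet_reflection hx0, hχ, mul_one])
      (fun y hy => by simp [hχW y hy, hρW y hy]) hcodim
  exact commute_of_mul_self_eq_one (Submodule.reflection_mul_reflection _) (hinvol φ hφ hφW)
    (hinvol ψ hψ hψW) (hinvol _ (by rw [map_mul, hφ, hψ, mul_one])
      fun y hy => by simp [hψW y hy, hφW y hy])

end Orthogonal

section AffineIsometries

open scoped commutatorElement

variable {V P : Type*} [NormedAddCommGroup V] [NormedSpace ℝ V] [MetricSpace P]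
  [NormedAddTorsor V P]

/-- The symmetry group of a figure `C`: the isometries mapping `C` onto itself. -/
def symmetryGroup (C : Set P) : Subgroup (P ≃ᵃⁱ[ℝ] P) where
  carrier := {f | f '' C = C}
  one_mem' := Set.image_id C
  mul_mem' {f g} hf hg := by
    rw [Set.mem_ofPred_eq] at hf hg ⊢
    rw [AffineIsometryEquiv.coe_mul, Set.image_comp, hg, hf]
  inv_mem' {f} hf := by
    rw [Set.mem_ofPred_eq] at hf ⊢
    nth_rw 1 [← hf]
    rw [← Set.image_comp, ← AffineIsometryEquiv.coe_mul, inv_mul_cancel]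
    exact Set.image_id C

/-- The homomorphism sending an affine isometry to its linear part. -/
def linearPart : (P ≃ᵃⁱ[ℝ] P) →* (V ≃ₗᵢ[ℝ] V) where
  toFun f := f.linearIsometryEquiv
  map_one' := rfl
  map_mul' _ _ := rfl

lemma map_vadd_eq (f : P ≃ᵃⁱ[ℝ] P) (v : V) (x : P) : f (v +ᵥ x) = linearPart f v +ᵥ f x :=
  f.map_vadd x v

lemma linearPart_vsub (f : P ≃ᵃⁱ[ℝ] P) (x y : P) : linearPart f (x -ᵥ y) = f x -ᵥ f y :=
  f.map_vsub x y

lemma eq_one_of_linearPart_eq_one {f : P ≃ᵃⁱ[ℝ] P} (hf : linearPart f = 1) {x : P}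
    (hx : f x = x) : f = 1 := by
  ext y
  rw [← vsub_vadd y x, map_vadd_eq, hf, hx]
  rfl

lemma commute_of_commute_linearPart {f g : P ≃ᵃⁱ[ℝ] P}
    (hfg : Commute (linearPart f) (linearPart g)) {x : P} (hx : ⁅f, g⁆ x = x) : Commute f g := by
  rw [← commutatorElement_eq_one_iff_commute] at hfg ⊢
  exact eq_one_of_linearPart_eq_one (by rw [map_commutatorElement, hfg]) hx

lemma map_vadd_eq_of_mem_span_singleton {f : P ≃ᵃⁱ[ℝ] P} {p : P} (hp : f p = p) {a v : V}
    (ha : linearPart f a = a) (hv : v ∈ ℝ ∙ a) : f (v +ᵥ p) = v +ᵥ p := by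
  rw [map_vadd_eq, map_eq_self_of_mem_span_singleton ha hv, hp]

end AffineIsometries

section CommonFixedPoint

open Module
open scoped commutatorElement

variable {V P : Type*} [NormedAddCommGroup V] [InnerProductSpace ℝ V] [MetricSpace P]
  [NormedAddTorsor V P]

lemma exists_common_fixedPoint_of_commute [FiniteDimensional ℝ V] (hV : finrank ℝ V ≤ 3)
    {f g : P ≃ᵃⁱ[ℝ] P} (hfg : Commute f g) (hg : orthogonalDet (linearPart g) = 1)
    {p q : P} (hp : f p = p) (hq : g q = q)
    {a : V} (ha : a ≠ 0) (hfa : linearPart f a = a) (hga : linearPart g a = a) :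
    ∃ x, f x = x ∧ g x = x := by
  rcases eq_or_ne (f q) q with hfq | hfq
  · exact ⟨q, hfq, hq⟩
  -- `g` fixes both `q` and `f q`, and the direction joining them is orthogonal to `a`.
  set d : V := f q -ᵥ q
  have hd0 : d ≠ 0 := vsub_ne_zero.2 hfq
  have hgd : linearPart g d = d := by
    rw [linearPart_vsub, hq]
    congr 1
    calc g (f q) = f (g q) := DFunLike.congr_fun hfg.eq.symm q
      _ = f q := by rw [hq]
  have had : ⟪a, d⟫ = 0 := by
    have hdp : d = linearPart f (q -ᵥ p) - (q -ᵥ p) := by rw [linearPart_vsub, hp]; simp [d]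
    rw [hdp, inner_sub_right, sub_eq_zero]
    nth_rw 1 [← hfa]
    exact LinearIsometryEquiv.inner_map_map _ _ _
  have hdisj : Disjoint (ℝ ∙ a) (ℝ ∙ d) :=
    (Submodule.isOrtho_span.2 (by rintro _ rfl _ rfl; exact had)).disjoint
  have hcodim : finrank ℝ ((ℝ ∙ a) ⊔ (ℝ ∙ d) : Submodule ℝ V)ᗮ ≤ 1 := by
    have := ((ℝ ∙ a) ⊔ (ℝ ∙ d)).finrank_add_finrank_orthogonal
    have := finrank_sup_span_singleton ha hd0 hdisj
    omega
  have hg1 : linearPart g = 1 := by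
    refine eq_one_of_fixed_of_codim_le_one hg (fun x hx => ?_) hcodim
    obtain ⟨y, hy, z, hz, rfl⟩ := Submodule.mem_sup.1 hx
    rw [map_add, map_eq_self_of_mem_span_singleton hga hy, map_eq_self_of_mem_span_singleton hgd hz]
  exact ⟨p, hp, by rw [eq_one_of_linearPart_eq_one hg1 hq]; rfl⟩

lemma mem_perpBisector_of_fixed {f : P ≃ᵃⁱ[ℝ] P} {x y z : P} (hy : f y = z) (hx : f x = x) :
    x ∈ AffineSubspace.perpBisector y z := by
  rw [AffineSubspace.mem_perpBisector_iff_dist_eq]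
  calc dist x y = dist (f x) (f y) := (f.dist_map x y).symm
    _ = dist x z := by rw [hx, hy]

lemma exists_common_fixedPoint_of_disjoint (hV : finrank ℝ V = 3) {f g : P ≃ᵃⁱ[ℝ] P} {p q z : P}
    (hp : f p = p) (hq : g q = q) (hz : f (g z) = z) {a b : V} (ha : a ≠ 0) (hb : b ≠ 0)
    (hfa : linearPart f a = a) (hgb : linearPart g b = b) (hab : Disjoint (ℝ ∙ a) (ℝ ∙ b)) :
    ∃ x, f x = x ∧ g x = x := by
  have : FiniteDimensional ℝ V := .of_finrank_eq_succ hV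
  have : Fact (finrank ℝ V = 2 + 1) := ⟨hV⟩
  rcases eq_or_ne (g z) z with hgz | hgz
  · exact ⟨z, by rwa [hgz] at hz, hgz⟩
  set H := AffineSubspace.perpBisector z (g z) with hH
  have hfH : ∀ x, f x = x → x ∈ H := fun x hx => by
    rw [hH, AffineSubspace.perpBisector_comm]
    exact mem_perpBisector_of_fixed hz hx
  have hgH : ∀ x, g x = x → x ∈ H := fun x hx => mem_perpBisector_of_fixed rfl hx
  have haH : (ℝ ∙ a) ≤ H.direction := fun v hv =>
    (AffineSubspace.vadd_mem_iff_mem_direction v (hfH p hp)).1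
      (hfH _ (map_vadd_eq_of_mem_span_singleton hp hfa hv))
  have hbH : (ℝ ∙ b) ≤ H.direction := fun v hv =>
    (AffineSubspace.vadd_mem_iff_mem_direction v (hgH q hq)).1
      (hgH _ (map_vadd_eq_of_mem_span_singleton hq hgb hv))
  have hdim : finrank ℝ H.direction = 2 := by
    rw [hH, AffineSubspace.direction_perpBisector]
    exact Submodule.finrank_orthogonal_span_singleton (vsub_ne_zero.2 hgz)
  have hsup : (ℝ ∙ a) ⊔ (ℝ ∙ b) = H.direction :=
    Submodule.eq_of_le_of_finrank_le (sup_le haH hbH)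
      (by rw [hdim, finrank_sup_span_singleton ha hb hab])
  obtain ⟨v, hv, w, hw, hvw⟩ := Submodule.mem_sup.1
    (hsup ▸ AffineSubspace.vsub_mem_direction (hgH q hq) (hfH p hp))
  refine ⟨v +ᵥ p, map_vadd_eq_of_mem_span_singleton hp hfa hv, ?_⟩
  have : v +ᵥ p = -w +ᵥ q := by
    rw [← vsub_vadd q p, ← hvw, vadd_vadd]
    congr 1
    abel
  rw [this]
  exact map_vadd_eq_of_mem_span_singleton hq hgb (neg_mem hw)

theorem exists_common_fixedPoint (hV : finrank ℝ V = 3) {G : Subgroup (P ≃ᵃⁱ[ℝ] P)}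
    (hG : ∀ h ∈ G, ∃ x, h x = x) {f g : P ≃ᵃⁱ[ℝ] P} (hf : f ∈ G) (hg : g ∈ G)
    (hdetf : orthogonalDet (linearPart f) = 1) (hdetg : orthogonalDet (linearPart g) = 1) :
    ∃ x, f x = x ∧ g x = x := by
  have : FiniteDimensional ℝ V := .of_finrank_eq_succ hV
  have : Fact (finrank ℝ V = 2 + 1) := ⟨hV⟩
  have hodd : Odd (finrank ℝ V) := hV ▸ by decide
  obtain ⟨p, hp⟩ := hG f hf
  obtain ⟨q, hq⟩ := hG g hg
  obtain ⟨a, ha, hfa⟩ := exists_ne_zero_fixed_of_odd_finrank hodd hdetf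
  obtain ⟨b, hb, hgb⟩ := exists_ne_zero_fixed_of_odd_finrank hodd hdetg
  by_cases hab : b ∈ ℝ ∙ a
  · have hfb := map_eq_self_of_mem_span_singleton hfa hab
    have hlin : Commute (linearPart f) (linearPart g) :=
      commute_of_fixed_of_codim_le_two hdetf hdetg (fun _ => map_eq_self_of_mem_span_singleton hfb)
        (fun _ => map_eq_self_of_mem_span_singleton hgb)
        (Submodule.finrank_orthogonal_span_singleton hb).le
    obtain ⟨x, hx⟩ := hG ⁅f, g⁆ (mul_mem (mul_mem (mul_mem hf hg) (inv_mem hf)) (inv_mem hg))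
    exact exists_common_fixedPoint_of_commute hV.le (commute_of_commute_linearPart hlin hx)
      hdetg hp hq hb hfb hgb
  · obtain ⟨z, hz⟩ := hG (f * g) (mul_mem hf hg)
    exact exists_common_fixedPoint_of_disjoint hV hp hq hz ha hb hfa hgb
      ((Submodule.disjoint_span_singleton' hb).2 hab)

end CommonFixedPoint

lemma IsRotation.exists_affineIsometryEquiv
    {f : EuclideanSpace ℝ (Fin 3) → EuclideanSpace ℝ (Fin 3)} (hf : IsRotation f) :
    ∃ g : EuclideanSpace ℝ (Fin 3) ≃ᵃⁱ[ℝ] EuclideanSpace ℝ (Fin 3),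
      orthogonalDet (linearPart g) = 1 ∧ ⇑g = f := by
  obtain ⟨⟨Q, v, hQ, hdet, hfQ⟩, -, -⟩ := hf
  let φ := Unitary.linearIsometryEquiv ⟨Matrix.toEuclideanCLM (n := Fin 3) (𝕜 := ℝ) Q,
    Unitary.map_mem _ hQ⟩
  refine ⟨φ.toAffineIsometryEquiv.trans (AffineIsometryEquiv.constVAdd ℝ _ v), ?_, ?_⟩
  · exact (LinearMap.det_toLpLin 2 Q).trans hdet
  · ext x i
    rw [hfQ, add_comm]
    rfl

theorem statement_11_general (X : RatParam 3) (hline : ¬ IsLine X.curve)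
    {f₁ f₂ : EuclideanSpace ℝ (Fin 3) ≃ᵃⁱ[ℝ] EuclideanSpace ℝ (Fin 3)}
    (hdet₁ : orthogonalDet (linearPart f₁) = 1) (hdet₂ : orthogonalDet (linearPart f₂) = 1)
    (hinv₁ : f₁ '' X.curve = X.curve) (hinv₂ : f₂ '' X.curve = X.curve) :
    ∃ x, f₁ x = x ∧ f₂ x = x :=
  exists_common_fixedPoint finrank_euclideanSpace_fin (G := symmetryGroup X.curve)
    (fun _ => X.exists_fixedPoint hline) hinv₁ hinv₂ hdet₁ hdet₂

/-- Let `C ⊆ ℝ³` be an infinite rational space curve that is not a line,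
invariant under two rotations `f₁`, `f₂` of `ℝ³` with axes `L₁`, `L₂`. Then `L₁` and `L₂` are
not skew: either `L₁ = L₂` or `L₁ ∩ L₂ ≠ ∅`. -/
theorem statement_11 (X : RatParam 3) (C : Set (EuclideanSpace ℝ (Fin 3)))
    (hC : C = X.curve) (hCinf : C.Infinite) (hline : ¬ IsLine C)
    (f₁ f₂ : EuclideanSpace ℝ (Fin 3) → EuclideanSpace ℝ (Fin 3))
    (h₁ : IsRotation f₁) (h₂ : IsRotation f₂)
    (L₁ L₂ : Set (EuclideanSpace ℝ (Fin 3)))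
    (hL₁ : L₁ = {x | f₁ x = x}) (hL₂ : L₂ = {x | f₂ x = x})
    (hinv₁ : f₁ '' C = C) (hinv₂ : f₂ '' C = C) :
    L₁ = L₂ ∨ (L₁ ∩ L₂).Nonempty := by
  subst hC hL₁ hL₂
  obtain ⟨g₁, hg₁, rfl⟩ := h₁.exists_affineIsometryEquiv
  obtain ⟨g₂, hg₂, rfl⟩ := h₂.exists_affineIsometryEquiv
  exact .inr (statement_11_general X hline hg₁ hg₂ hinv₁ hinv₂)
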